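/- Separated exact reduction under Assumption (A3): suppose each conditional map factors as M_k = E ∘ K_k with E and K_k linear maps on the n×n complex matrices. Let W be a finite-dimensional complex vector space and R : Matrix n n ℂ →ₗ[ℂ] W, J : W →ₗ[ℂ] Matrix n n ℂ with R ∘ J = id_W, set 𝔼 = J ∘ R, and assume ker 𝔼 ⊆ N and that the range of 𝔼 is K_k-invariant for every k ∈ Ω (K_k(𝔼 X) belongs to the range of 𝔼 for all X). Define Ǩ_k = R ∘ K_k ∘ J, Ě = R ∘ E ∘ J, and Č = C ∘ J. Then for every matrix ρ and every word w = [k_0, …, k_t] over Ω, C(M_w ρ) = Č( (Ě ∘ Ǩ_{k_t}) ∘ ⋯ ∘ (Ě ∘ Ǩ_{k_0}) (R ρ) ); i.e. the reduced model with dynamics and conditioning reduced separately reproduces the conditioned output. -/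

import Mathlib

/-!
Put `𝔼 = J ∘ R`, an idempotent. Since `ker 𝔼 ⊆ N`, replacing a state by its image under `𝔼` changes
no conditioned output, so `𝔼` may be inserted before every step of a word; this gives the exact
reduction with `M k` compressed as a whole to `R ∘ M k ∘ J`. Compressing `E` and `K k` separately
inserts one more `𝔼` between them, which acts trivially because `K k` preserves the range of `𝔼`.
-/

open Matrix

/-- Composition of the conditional maps along a word `w = [k₀, …, k_t]`:
`Mword M w = M_{k_t} ∘ ⋯ ∘ M_{k₀}` (the empty word gives the identity). -/
def Mword {Ω V : Type*} [AddCommMonoid V] [Module ℂ V]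
    (M : Ω → V →ₗ[ℂ] V) : List Ω → (V →ₗ[ℂ] V)
  | [] => LinearMap.id
  | k :: w => (Mword M w).comp (M k)

/-- The non-observable subspace `N = {X | C (M_w X) = 0 for every word w}`. -/
def NonObs {Ω : Type*} {n : ℕ} {Y : Type*} [AddCommGroup Y] [Module ℂ Y]
    (M : Ω → Matrix (Fin n) (Fin n) ℂ →ₗ[ℂ] Matrix (Fin n) (Fin n) ℂ)
    (C : Matrix (Fin n) (Fin n) ℂ →ₗ[ℂ] Y) : Set (Matrix (Fin n) (Fin n) ℂ) :=
  {X | ∀ w : List Ω, C (Mword M w X) = 0}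

section Compression

variable {S V W : Type*}

theorem isIdempotentElem_comp_of_comp_eq_id [Semiring S] [AddCommMonoid V] [Module S V]
    [AddCommMonoid W] [Module S W] {R : V →ₗ[S] W} {J : W →ₗ[S] V}
    (hRJ : R ∘ₗ J = LinearMap.id) : IsIdempotentElem (J ∘ₗ R) := by
  rw [IsIdempotentElem, Module.End.mul_eq_comp, LinearMap.comp_assoc, ← LinearMap.comp_assoc R,
    hRJ, LinearMap.id_comp]

theorem compression_comp_compression_comp [Ring S] [AddCommGroup V] [Module S V]
    [AddCommMonoid W] [Module S W] {R : V →ₗ[S] W} {J : W →ₗ[S] V} {K : V →ₗ[S] V}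
    (hP : IsIdempotentElem (J ∘ₗ R))
    (hK : LinearMap.range (J ∘ₗ R) ∈ Module.End.invtSubmodule K) (E : V →ₗ[S] V) :
    ((R ∘ₗ E ∘ₗ J) ∘ₗ (R ∘ₗ K ∘ₗ J)) ∘ₗ R = R ∘ₗ (E ∘ₗ K) ∘ₗ J ∘ₗ R :=
  congrArg (fun T ↦ R ∘ₗ E ∘ₗ T)
    (LinearMap.IsIdempotentElem.conj_eq_of_range_mem_invtSubmodule hP hK)

end Compression

section Reduction

variable {Ω V W Y : Type*} [AddCommMonoid W] [Module ℂ W]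

theorem output_mword_eq_of_intertwining [AddCommMonoid V] [Module ℂ V] [AddCommMonoid Y]
    [Module ℂ Y] {M : Ω → V →ₗ[ℂ] V} {M' : Ω → W →ₗ[ℂ] W} {C : V →ₗ[ℂ] Y}
    {R : V →ₗ[ℂ] W} {J : W →ₗ[ℂ] V}
    (hC : ∀ w, (C ∘ₗ Mword M w) ∘ₗ (J ∘ₗ R) = C ∘ₗ Mword M w)
    (hM : ∀ k, M' k ∘ₗ R = R ∘ₗ M k ∘ₗ J ∘ₗ R) (ρ : V) (w : List Ω) :
    C (Mword M w ρ) = C (J (Mword M' w (R ρ))) := by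
  have insert_projection (w : List Ω) (X : V) : C (Mword M w X) = C (Mword M w (J (R X))) :=
    (LinearMap.congr_fun (hC w) X).symm
  induction w generalizing ρ with
  | nil => exact insert_projection [] ρ
  | cons k w ih =>
    calc C (Mword M (k :: w) ρ)
      _ = C (Mword M w (M k (J (R ρ)))) := insert_projection (k :: w) ρ
      _ = C (J (Mword M' w (R (M k (J (R ρ)))))) := ih _
      _ = C (J (Mword M' w (M' k (R ρ)))) :=
        congrArg (fun x ↦ C (J (Mword M' w x))) (LinearMap.congr_fun (hM k) ρ).symm

variable [AddCommGroup V] [Module ℂ V] [AddCommGroup Y] [Module ℂ Y]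

/-- The non-observable subspace of a conditional evolution on an arbitrary complex vector space,
as a submodule; for matrix spaces its underlying set is `NonObs M C`. -/
def nonObservable (M : Ω → V →ₗ[ℂ] V) (C : V →ₗ[ℂ] Y) : Submodule ℂ V :=
  ⨅ w : List Ω, LinearMap.ker (C ∘ₗ Mword M w)

theorem mem_nonObservable {M : Ω → V →ₗ[ℂ] V} {C : V →ₗ[ℂ] Y} {X : V} :
    X ∈ nonObservable M C ↔ ∀ w : List Ω, C (Mword M w X) = 0 := by
  simp only [nonObservable, Submodule.mem_iInf, LinearMap.mem_ker, LinearMap.comp_apply]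

theorem ker_le_nonObservable_iff {M : Ω → V →ₗ[ℂ] V} {C : V →ₗ[ℂ] Y} {P : V →ₗ[ℂ] V}
    (hP : IsIdempotentElem P) :
    LinearMap.ker P ≤ nonObservable M C ↔
      ∀ w, (C ∘ₗ Mword M w) ∘ₗ P = C ∘ₗ Mword M w := by
  simp only [nonObservable, le_iInf_iff, LinearMap.IsIdempotentElem.comp_eq_left_iff hP]

theorem separated_reduction_A3_general {M K E : Ω → V →ₗ[ℂ] V} {C : V →ₗ[ℂ] Y}
    {R : V →ₗ[ℂ] W} {J : W →ₗ[ℂ] V} (hfac : ∀ k, M k = E k ∘ₗ K k)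
    (hP : IsIdempotentElem (J ∘ₗ R)) (hker : LinearMap.ker (J ∘ₗ R) ≤ nonObservable M C)
    (hinv : ∀ k, LinearMap.range (J ∘ₗ R) ∈ Module.End.invtSubmodule (K k))
    (ρ : V) (w : List Ω) :
    C (Mword M w ρ) =
      C (J (Mword (fun k ↦ (R ∘ₗ E k ∘ₗ J) ∘ₗ (R ∘ₗ K k ∘ₗ J)) w (R ρ))) := by
  refine output_mword_eq_of_intertwining ((ker_le_nonObservable_iff hP).1 hker) (fun k ↦ ?_) ρ w
  rw [hfac]
  exact compression_comp_compression_comp hP (hinv k) (E k)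

end Reduction

/-- Separated exact reduction under Assumption (A3): if `M_k = E ∘ K_k`, `R ∘ J = id`,
`ker (J ∘ R) ⊆ N` and the range of `𝔼 = J ∘ R` is `K_k`-invariant for every `k`, then the
reduced model with separately reduced dynamics `Ě = R ∘ E ∘ J` and conditioning
`Ǩ_k = R ∘ K_k ∘ J` reproduces the conditioned output. -/
theorem separated_reduction_A3 {Ω : Type*} [Fintype Ω] {n : ℕ} (hn : 1 ≤ n)
    {Y : Type*} [AddCommGroup Y] [Module ℂ Y] [FiniteDimensional ℂ Y]
    {W : Type*} [AddCommGroup W] [Module ℂ W] [FiniteDimensional ℂ W]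
    (M K : Ω → Matrix (Fin n) (Fin n) ℂ →ₗ[ℂ] Matrix (Fin n) (Fin n) ℂ)
    (E : Matrix (Fin n) (Fin n) ℂ →ₗ[ℂ] Matrix (Fin n) (Fin n) ℂ)
    (C : Matrix (Fin n) (Fin n) ℂ →ₗ[ℂ] Y)
    (hfac : ∀ k, M k = E.comp (K k))
    (R : Matrix (Fin n) (Fin n) ℂ →ₗ[ℂ] W) (J : W →ₗ[ℂ] Matrix (Fin n) (Fin n) ℂ)
    (hRJ : R.comp J = LinearMap.id)
    (hker : ∀ X, J (R X) = 0 → X ∈ NonObs M C)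
    (hinv : ∀ (k : Ω) (X : Matrix (Fin n) (Fin n) ℂ),
      K k (J (R X)) ∈ LinearMap.range (J.comp R)) :
    ∀ (ρ : Matrix (Fin n) (Fin n) ℂ) (w : List Ω),
      C (Mword M w ρ) =
        C (J (Mword
          (fun k => (R.comp (E.comp J)).comp (R.comp ((K k).comp J))) w (R ρ))) :=
  separated_reduction_A3_general hfac (isIdempotentElem_comp_of_comp_eq_id hRJ)
    (fun X hX ↦ mem_nonObservable.2 (hker X hX)) (by rintro k _ ⟨X, rfl⟩; exact hinv k X)
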